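/- Let 3 ≤ t ≤ d be integers, let G_1, G_2 be coprime homogeneous polynomials of degree d in κ[x_0,x_1,x_2] over an algebraically closed field κ, and let X ⊆ V(G_1,G_2) be a subscheme of length at most td + d − t + 1. Then the failure of X to impose independent conditions on degree-d forms satisfies g_X(d) ≤ binom(t−1,2). -/

import Mathlib

open MvPolynomial

/-- The degree-`k` graded piece `I_k` of an ideal `I` of `κ[x_0,x_1,x_2]`, as a
`κ`-subspace. -/
noncomputable def gradedIdealPiece (κ : Type*) [Field κ]
    (I : Ideal (MvPolynomial (Fin 3) κ)) (k : ℕ) :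
    Submodule κ (MvPolynomial (Fin 3) κ) :=
  Submodule.restrictScalars κ I ⊓ MvPolynomial.homogeneousSubmodule (Fin 3) κ k

open Module

/-- A sequence of naturals that strictly decreases until it vanishes has triangular tail sums. -/
lemma sum_le_choose_of_strict_decrease (h : ℕ → ℕ)
    (hs : ∀ k, h k = 0 ∧ h (k + 1) = 0 ∨ h (k + 1) + 1 ≤ h k) (n : ℕ) :
    ∑ i ∈ Finset.range n, h i ≤ (h 0 + 1).choose 2 := by
  induction n generalizing h with
  | zero => simp
  | succ n ih =>
    rw [Finset.sum_range_succ']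
    have key := ih (fun i => h (i + 1)) (fun k => hs (k + 1))
    simp only [zero_add] at key
    rcases hs 0 with ⟨h0, h1⟩ | h1
    · simp only [zero_add] at h1
      rw [h1] at key
      simpa [h0] using key
    · simp only [zero_add] at h1
      have hmono : (h 1 + 1).choose 2 ≤ (h 0).choose 2 := Nat.choose_le_choose 2 h1
      have hpascal : (h 0 + 1).choose 2 = (h 0).choose 1 + (h 0).choose 2 :=
        Nat.choose_succ_succ' _ _
      rw [Nat.choose_one_right] at hpascal
      omega

/-- Lower bound for the partial sums of a sequence bounded below by `min (k + 1) (t + 1)`. -/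
lemma choose_add_mul_le_sum (h : ℕ → ℕ) (t n : ℕ)
    (hlow : ∀ k < t + n, min (k + 1) (t + 1) ≤ h k) :
    (t + 1).choose 2 + (t + 1) * n ≤ ∑ i ∈ Finset.range (t + n), h i := by
  have hsmall : ∀ m, m ≤ t → (m + 1).choose 2 ≤ ∑ i ∈ Finset.range m, h i := by
    intro m hm
    induction m with
    | zero => simp
    | succ m ih =>
      rw [Finset.sum_range_succ, Nat.choose_succ_succ' (m + 1) 1, Nat.choose_one_right]
      have := ih (by omega)
      have := hlow m (by omega)
      rw [min_eq_left (by omega)] at this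
      simp only [Nat.reduceAdd]
      omega
  induction n with
  | zero => simpa using hsmall t le_rfl
  | succ n ih =>
    rw [← add_assoc, Finset.sum_range_succ, mul_add, mul_one]
    have := ih (fun k hk => hlow k (by omega))
    have := hlow (t + n) (by omega)
    omega

/-- The numerical core: the tail of an `h`-vector that strictly decreases from degree `d - 1` on
is small when its total is. -/
lemma tail_sum_le_choose (h : ℕ → ℕ) (t d n : ℕ) (ht : 3 ≤ t) (htd : t ≤ d)
    (hle : ∀ k, h k ≤ k + 1) (hmono : ∀ k, h k = k + 1 ∨ h (k + 1) ≤ h k)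
    (hstrict : ∀ k, d ≤ k + 1 → h k = 0 ∨ h (k + 1) + 1 ≤ h k)
    (hsum : ∑ i ∈ Finset.range (d + 1 + n), h i ≤ t * d + d - t + 1) :
    ∑ i ∈ Finset.range n, h (d + 1 + i) ≤ (t - 1).choose 2 := by
  have hstrict' : ∀ k, d ≤ k + 1 → h k = 0 ∧ h (k + 1) = 0 ∨ h (k + 1) + 1 ≤ h k := by
    intro k hk
    rcases hstrict k hk with h0 | h0
    · left
      rcases hmono k with h1 | h1 <;> omega
    · exact Or.inr h0
  have htail := sum_le_choose_of_strict_decrease (fun i => h (d + 1 + i))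
    (fun k => hstrict' (d + 1 + k) (by omega)) n
  simp only [add_zero] at htail
  by_cases ha : h (d + 1) + 2 ≤ t
  · exact htail.trans (Nat.choose_le_choose 2 (by omega))
  have hd : t ≤ h d := by
    rcases hstrict' d (by omega) with h0 | h0 <;> omega
  obtain ⟨e, rfl⟩ : ∃ e, d = e + 1 := ⟨d - 1, by omega⟩
  have he : t + 1 ≤ h e := by
    rcases hstrict' e (by omega) with h0 | h0 <;> omega
  have hlow : ∀ j k, j + k = e → min (k + 1) (t + 1) ≤ h k := by
    intro j
    induction j with
    | zero =>
      intro k hk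
      obtain rfl : k = e := by omega
      omega
    | succ j ih =>
      intro k hk
      have := ih (k + 1) (by omega)
      rcases hmono k with h1 | h1 <;> omega
  have hte : t ≤ e := by
    have := hle e
    omega
  obtain ⟨m, rfl⟩ := Nat.exists_eq_add_of_le hte
  have hhead := choose_add_mul_le_sum h t (m + 1) (fun k hk => hlow (t + m - k) k (by omega))
  rw [Finset.sum_range_add, Finset.sum_range_succ] at hsum
  rw [← add_assoc] at hhead
  obtain ⟨s, rfl⟩ : ∃ s, t = s + 1 := ⟨t - 1, by omega⟩
  have e1 : (s + 1 + 1).choose 2 = s + 1 + (s + s.choose 2) := by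
    rw [Nat.choose_succ_succ' (s + 1) 1, Nat.choose_succ_succ' s 1]
    simp
  have e2 : s.choose 2 * 2 + s = s * s := by
    have := Nat.choose_two_right s
    have h2 := Nat.div_mul_cancel (Nat.even_mul_pred_self s).two_dvd
    rw [this, h2]
    cases s with
    | zero => simp
    | succ s => simp; ring
  rw [e1] at hhead
  simp only [Nat.add_sub_cancel]
  have e3 : (s + 1) * (s + 1 + m + 1) + (s + 1 + m + 1) - (s + 1) + 1
      = s * s + s * m + 3 * s + 2 * m + 4 := by
    have : (s + 1) * (s + 1 + m + 1) + (s + 1 + m + 1)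
      = (s * s + s * m + 3 * s + 2 * m + 3) + (s + 1) := by ring
    omega
  have e4 : (s + 1 + 1) * (m + 1) = s * m + s + 2 * m + 2 := by ring
  rw [e3] at hsum
  rw [e4] at hhead
  omega

section LinearAlgebra

lemma finrank_map_add_finrank_inf_ker {K V V' : Type*} [Field K] [AddCommGroup V] [Module K V]
    [AddCommGroup V'] [Module K V'] (f : V →ₗ[K] V') (A : Submodule K V) [FiniteDimensional K A] :
    finrank K (A.map f) + finrank K (A ⊓ LinearMap.ker f : Submodule K V) = finrank K A := by
  have h := (f.domRestrict A).finrank_range_add_finrank_ker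
  rw [LinearMap.range_domRestrict] at h
  have e : finrank K (LinearMap.ker (f.domRestrict A))
      = finrank K (A ⊓ LinearMap.ker f : Submodule K V) := by
    rw [← Submodule.map_comap_subtype]
    exact (Submodule.equivMapOfInjective A.subtype A.subtype_injective _).finrank_eq
  rw [← e, h]

lemma finrank_map_mulLeft {κ A : Type*} [Field κ] [CommRing A] [IsDomain A] [Algebra κ A]
    {a : A} (ha : a ≠ 0) (W : Submodule κ A) :
    finrank κ (W.map (LinearMap.mulLeft κ a)) = finrank κ W :=
  ((Submodule.equivMapOfInjective _ (mul_right_injective₀ ha) W).finrank_eq).symm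

end LinearAlgebra

section Dimension

variable {κ : Type*} [Field κ]

lemma finrank_homogeneousSubmodule (n k : ℕ) :
    finrank κ (homogeneousSubmodule (Fin n) κ k) = (n + k - 1).choose k := by
  have hset : {m : Fin n →₀ ℕ | m.degree = k} =
      ((Finset.univ.finsuppAntidiag k : Finset (Fin n →₀ ℕ)) : Set (Fin n →₀ ℕ)) := by
    ext m
    simp [Finsupp.degree_eq_sum]
  rw [homogeneousSubmodule_eq_finsupp_supported, hset,
    (AddMonoidAlgebra.supportedEquivFinsupp _).finrank_eq, finrank_finsupp_self]
  simp [Finset.card_finsuppAntidiag_nat_eq_choose]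

lemma finrank_homogeneousSubmodule_two (k : ℕ) :
    finrank κ (homogeneousSubmodule (Fin 2) κ k) = k + 1 := by
  rw [finrank_homogeneousSubmodule, show 2 + k - 1 = k + 1 by omega, Nat.choose_succ_self_right]

instance (n k : ℕ) : FiniteDimensional κ (homogeneousSubmodule (Fin n) κ k) :=
  Module.Finite.of_fg (homogeneousSubmodule_fg (Fin n) κ k)

lemma finiteDimensional_of_le_homogeneousSubmodule {n k : ℕ}
    {W : Submodule κ (MvPolynomial (Fin n) κ)} (hW : W ≤ homogeneousSubmodule (Fin n) κ k) :
    FiniteDimensional κ W :=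
  Submodule.finiteDimensional_of_le hW

end Dimension

lemma IsRelPrime.dvd_of_dvd_mul_of_dvd_mul {A : Type*} [CommRing A] [IsDomain A]
    [DecompositionMonoid A] {x y f g : A} (hxy : IsRelPrime x y) (hx : f ∣ x * g)
    (hy : f ∣ y * g) : f ∣ g := by
  obtain ⟨p, q, hp, ⟨r, rfl⟩, rfl⟩ := exists_dvd_and_dvd_of_dvd_mul hx
  rcases eq_or_ne q 0 with rfl | hq
  · simp
  have hpr : p ∣ y * r := by
    rw [← mul_dvd_mul_iff_right hq]
    convert! hy using 1
    ring
  rw [mul_comm p q]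
  exact mul_dvd_mul_left q ((hxy.of_dvd_left hp).dvd_of_dvd_mul_left hpr)

section Homogeneous

variable {κ σ : Type*} [Field κ]

lemma homogeneousComponent_mul_of_isHomogeneous {p : MvPolynomial σ κ} {m : ℕ}
    (hp : p.IsHomogeneous m) (g : MvPolynomial σ κ) (k : ℕ) :
    homogeneousComponent (m + k) (p * g) = p * homogeneousComponent k g := by
  conv_lhs => rw [← sum_homogeneousComponent g, Finset.mul_sum, map_sum]
  rw [Finset.sum_congr rfl (fun i _ => homogeneousComponent_of_mem
    (hp.mul (homogeneousComponent_isHomogeneous i g)))]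
  simp only [Nat.add_left_cancel_iff]
  rw [Finset.sum_ite_eq]
  split_ifs with h
  · rfl
  · rw [homogeneousComponent_eq_zero k g (by simpa using h), mul_zero]

lemma isHomogeneous_of_mul {p g : MvPolynomial σ κ} {m k : ℕ} (hp0 : p ≠ 0)
    (hp : p.IsHomogeneous m) (hg : (p * g).IsHomogeneous (m + k)) : g.IsHomogeneous k := by
  have h := homogeneousComponent_mul_of_isHomogeneous hp g k
  rw [homogeneousComponent_eq_self hg] at h
  rw [mul_left_cancel₀ hp0 h]
  exact homogeneousComponent_isHomogeneous k g

lemma X_not_dvd_X_of_ne {i j : σ} (h : i ≠ j) : ¬ (X i : MvPolynomial σ κ) ∣ X j := by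
  simpa [X_dvd_X] using h

end Homogeneous

section TwoVariables

variable {κ : Type*} [Field κ]

/-- The space `x W + y W` spanned by the multiples of `W` by the two variables. -/
noncomputable def mulVars (W : Submodule κ (MvPolynomial (Fin 2) κ)) :
    Submodule κ (MvPolynomial (Fin 2) κ) :=
  W.map (LinearMap.mulLeft κ (X 0)) ⊔ W.map (LinearMap.mulLeft κ (X 1))

/-- The space of polynomials whose multiples by both variables lie in `W`. -/
noncomputable def divVars (W : Submodule κ (MvPolynomial (Fin 2) κ)) :
    Submodule κ (MvPolynomial (Fin 2) κ) :=
  W.comap (LinearMap.mulLeft κ (X 0)) ⊓ W.comap (LinearMap.mulLeft κ (X 1))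

lemma mulVars_le {W V : Submodule κ (MvPolynomial (Fin 2) κ)}
    (h : ∀ f ∈ W, ∀ i, X i * f ∈ V) : mulVars W ≤ V := by
  refine sup_le ?_ ?_ <;> rw [Submodule.map_le_iff_le_comap]
  · exact fun f hf => h f hf 0
  · exact fun f hf => h f hf 1

lemma mulVars_divVars_le (W : Submodule κ (MvPolynomial (Fin 2) κ)) :
    mulVars (divVars W) ≤ W := by
  refine mulVars_le fun f hf i => ?_
  fin_cases i
  · exact hf.1
  · exact hf.2

lemma dvd_of_mem_mulVars {W : Submodule κ (MvPolynomial (Fin 2) κ)} {F : MvPolynomial (Fin 2) κ}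
    (h : ∀ f ∈ W, F ∣ f) {g : MvPolynomial (Fin 2) κ} (hg : g ∈ mulVars W) : F ∣ g := by
  have : mulVars W ≤ (Ideal.span {F}).restrictScalars κ :=
    mulVars_le fun f hf i => Ideal.mem_span_singleton.2 ((h f hf).mul_left _)
  exact Ideal.mem_span_singleton.1 (this hg)

lemma divVars_le {W : Submodule κ (MvPolynomial (Fin 2) κ)} {k : ℕ}
    (hW : W ≤ homogeneousSubmodule (Fin 2) κ (k + 1)) :
    divVars W ≤ homogeneousSubmodule (Fin 2) κ k := by
  intro f hf
  refine isHomogeneous_of_mul (X_ne_zero 0) (isHomogeneous_X κ (0 : Fin 2)) ?_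
  rw [add_comm]
  exact hW hf.1

lemma divVars_eq_bot {W : Submodule κ (MvPolynomial (Fin 2) κ)}
    (hW : W ≤ homogeneousSubmodule (Fin 2) κ 0) : divVars W = ⊥ := by
  rw [eq_bot_iff]
  intro f hf
  by_contra hf0
  rw [Submodule.mem_bot] at hf0
  have h : (X 0 * f).IsHomogeneous 0 := hW hf.1
  rw [← totalDegree_zero_iff_isHomogeneous, totalDegree_mul_of_isDomain (X_ne_zero 0) hf0,
    totalDegree_X] at h
  omega

lemma map_inf_map_eq (W : Submodule κ (MvPolynomial (Fin 2) κ)) :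
    W.map (LinearMap.mulLeft κ (X 0)) ⊓ W.map (LinearMap.mulLeft κ (X 1))
      = (divVars W).map (LinearMap.mulLeft κ (X 0 * X 1)) := by
  ext g
  constructor
  · rintro ⟨⟨a, ha, rfl⟩, ⟨b, hb, hab⟩⟩
    simp only [LinearMap.mulLeft_apply] at hab
    have hdvd : (X 1 : MvPolynomial (Fin 2) κ) ∣ X 0 * a := ⟨b, hab.symm⟩
    obtain ⟨f, rfl⟩ := (X_prime.dvd_or_dvd hdvd).resolve_left (X_not_dvd_X_of_ne (by decide))
    have hbf : b = X 0 * f := by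
      refine mul_left_cancel₀ (X_ne_zero (R := κ) (1 : Fin 2)) ?_
      rw [hab]
      ring
    refine ⟨f, ⟨?_, ha⟩, ?_⟩
    · change X 0 * f ∈ W
      rwa [← hbf]
    · simp only [LinearMap.mulLeft_apply]
      ring
  · rintro ⟨f, ⟨h0, h1⟩, rfl⟩
    refine ⟨⟨X 1 * f, h1, ?_⟩, ⟨X 0 * f, h0, ?_⟩⟩ <;> simp only [LinearMap.mulLeft_apply] <;> ring

lemma finrank_mulVars_add {W : Submodule κ (MvPolynomial (Fin 2) κ)} [FiniteDimensional κ W] :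
    finrank κ (mulVars W) + finrank κ (divVars W) = finrank κ W + finrank κ W := by
  have h := Submodule.finrank_sup_add_finrank_inf_eq (W.map (LinearMap.mulLeft κ (X 0)))
    (W.map (LinearMap.mulLeft κ (X 1)))
  rw [map_inf_map_eq, finrank_map_mulLeft (mul_ne_zero (X_ne_zero _) (X_ne_zero _)),
    finrank_map_mulLeft (X_ne_zero _), finrank_map_mulLeft (X_ne_zero _)] at h
  exact h

lemma exists_dvd_of_finrank_le_one {W : Submodule κ (MvPolynomial (Fin 2) κ)}
    [FiniteDimensional κ W] (h : finrank κ W ≤ 1) : ∃ F ∈ W, ∀ f ∈ W, F ∣ f := by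
  obtain ⟨F, hF⟩ := finrank_le_one_iff.1 h
  refine ⟨F, F.2, fun f hf => ?_⟩
  obtain ⟨c, hc⟩ := hF ⟨f, hf⟩
  refine ⟨C c, ?_⟩
  rw [mul_comm, ← smul_eq_C_mul]
  exact (congrArg Subtype.val hc).symm

/-- Multiplying a nonzero space of binary forms by the variables raises its dimension, and raises it
by exactly one only for the multiples of a single form. -/
lemma mulVars_growth (k : ℕ) (W : Submodule κ (MvPolynomial (Fin 2) κ))
    (hW : W ≤ homogeneousSubmodule (Fin 2) κ k) (hW0 : W ≠ ⊥) :
    finrank κ W + 1 ≤ finrank κ (mulVars W) ∧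
    (finrank κ (mulVars W) = finrank κ W + 1 →
      ∃ (F : MvPolynomial (Fin 2) κ) (e : ℕ), F.IsHomogeneous e ∧ e + finrank κ W = k + 1 ∧
        ∀ f ∈ W, F ∣ f) := by
  have := finiteDimensional_of_le_homogeneousSubmodule hW
  have hpos : 0 < finrank κ W := by
    rw [Nat.pos_iff_ne_zero, Ne, Submodule.finrank_eq_zero]
    exact hW0
  have hdim := finrank_mulVars_add (W := W)
  by_cases hU : divVars W = ⊥
  · rw [hU, finrank_bot, add_zero] at hdim
    refine ⟨by omega, fun heq => ?_⟩
    have h1 : finrank κ W = 1 := by omega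
    obtain ⟨F, hF, hdvd⟩ := exists_dvd_of_finrank_le_one h1.le
    exact ⟨F, k, hW hF, by omega, hdvd⟩
  · cases k with
    | zero => exact absurd (divVars_eq_bot hW) hU
    | succ k =>
      obtain ⟨hle, heq⟩ := mulVars_growth k (divVars W) (divVars_le hW) hU
      have hmono := Submodule.finrank_mono (mulVars_divVars_le W)
      refine ⟨by omega, fun h => ?_⟩
      obtain ⟨F, e, hF, he, hdvd⟩ := heq (by omega)
      refine ⟨F, e, hF, by omega, fun f hf => ?_⟩
      rw [← Submodule.eq_of_le_of_finrank_eq (mulVars_divVars_le W) (by omega)] at hf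
      exact dvd_of_mem_mulVars hdvd hf

/-- If `V` contains the multiples of `W` by both variables and has dimension at most one more,
then the members of `V` have a common factor of the complementary degree. -/
lemma exists_common_factor {k : ℕ} {W V : Submodule κ (MvPolynomial (Fin 2) κ)}
    (hW : W ≤ homogeneousSubmodule (Fin 2) κ k) (hV : V ≤ homogeneousSubmodule (Fin 2) κ (k + 1))
    (hWV : ∀ f ∈ W, ∀ i, X i * f ∈ V) (hdim : finrank κ V ≤ finrank κ W + 1) :
    ∃ (F : MvPolynomial (Fin 2) κ) (e : ℕ), F.IsHomogeneous e ∧ e + finrank κ W = k + 1 ∧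
      ∀ f ∈ V, F ∣ f := by
  have := finiteDimensional_of_le_homogeneousSubmodule hV
  by_cases hW0 : W = ⊥
  · subst hW0
    rw [finrank_bot, zero_add] at hdim
    obtain ⟨F, hF, hdvd⟩ := exists_dvd_of_finrank_le_one hdim
    exact ⟨F, k + 1, hV hF, by simp, hdvd⟩
  · obtain ⟨hle, heq⟩ := mulVars_growth k W hW hW0
    have hmono := Submodule.finrank_mono (mulVars_le hWV)
    obtain ⟨F, e, hF, he, hdvd⟩ := heq (by omega)
    refine ⟨F, e, hF, he, fun f hf => ?_⟩
    rw [← Submodule.eq_of_le_of_finrank_eq (mulVars_le hWV) (by omega)] at hf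
    exact dvd_of_mem_mulVars hdvd hf

end TwoVariables

section RegularLinearForm

variable {κ : Type*} [Field κ]

/-- The ideal generated by two coprime forms in three variables is saturated. -/
lemma mem_span_pair_of_X_mul_mem {G₁ G₂ : MvPolynomial (Fin 3) κ} (hG₂ : G₂ ≠ 0)
    (hcop : IsRelPrime G₁ G₂) {f : MvPolynomial (Fin 3) κ}
    (hf : ∀ i, X i * f ∈ Ideal.span {G₁, G₂}) : f ∈ Ideal.span {G₁, G₂} := by
  simp only [Ideal.mem_span_pair] at hf ⊢
  choose a b hab using hf
  have hdiv : ∀ i j, ∃ c, X j * a i - X i * a j = G₂ * c := by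
    intro i j
    refine hcop.symm.dvd_of_dvd_mul_right (z := G₁) ⟨X i * b j - X j * b i, ?_⟩
    linear_combination X j * hab i - X i * hab j
  choose c hc using hdiv
  have hcycle : X 2 * c 0 1 = X 0 * (- c 1 2) + X 1 * (- c 2 0) := by
    refine mul_left_cancel₀ hG₂ ?_
    linear_combination -X 2 * hc 0 1 - X 0 * hc 1 2 - X 1 * hc 2 0
  have hmem : c 0 1 ∈ Ideal.span ((X : Fin 3 → MvPolynomial (Fin 3) κ) '' {0, 1}) := by
    have h2 : X 2 * c 0 1 ∈ Ideal.span ((X : Fin 3 → MvPolynomial (Fin 3) κ) '' {0, 1}) := by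
      rw [hcycle, Set.image_pair]
      exact Ideal.mem_span_pair.2 ⟨-c 1 2, -c 2 0, by ring⟩
    rw [mem_ideal_span_X_image] at h2 ⊢
    intro m hm
    obtain ⟨i, hi, hne⟩ := h2 (Finsupp.single 2 1 + m) (by
      rw [MvPolynomial.mem_support_iff] at hm ⊢
      rwa [coeff_X_mul])
    refine ⟨i, hi, ?_⟩
    rcases hi with rfl | rfl <;> simpa using hne
  rw [Set.image_pair, Ideal.mem_span_pair] at hmem
  obtain ⟨p, q, hpq⟩ := hmem
  have hX0 : (X 0 : MvPolynomial (Fin 3) κ) ≠ 0 := X_ne_zero 0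
  have hX01 : ¬ (X 0 : MvPolynomial (Fin 3) κ) ∣ X 1 := X_not_dvd_X_of_ne (by decide)
  have ha : X 1 * (a 0 - q * G₂) = X 0 * (a 1 + p * G₂) := by
    linear_combination hc 0 1 - G₂ * hpq
  obtain ⟨u, hu⟩ := (X_prime.dvd_or_dvd ⟨_, ha⟩).resolve_left hX01
  have hu1 : a 1 + p * G₂ = X 1 * u := by
    refine mul_left_cancel₀ hX0 ?_
    linear_combination X 1 * hu - ha
  have hb : X 1 * (b 0 + q * G₁) = X 0 * (b 1 - p * G₁) := by
    refine mul_left_cancel₀ hG₂ ?_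
    linear_combination X 1 * hab 0 - X 0 * hab 1 - G₁ * ha
  obtain ⟨v, hv⟩ := (X_prime.dvd_or_dvd ⟨_, hb⟩).resolve_left hX01
  refine ⟨u, v, mul_left_cancel₀ hX0 ?_⟩
  linear_combination hab 0 - G₁ * hu - G₂ * hv

/-- Over an infinite field, a linear system that vanishes at no associated point of two ideals
contains an element, outside a given proper hyperplane, that is regular modulo both ideals. -/
lemma exists_regular_mem_range {S V : Type*} [Infinite κ] [CommRing S] [IsNoetherianRing S]
    [Algebra κ S] [AddCommGroup V] [Module κ V] (lin : V →ₗ[κ] S) (φ : V →ₗ[κ] κ) (hφ : φ ≠ 0)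
    (I J : Ideal S) (hI : ∀ f, (∀ v, lin v * f ∈ I) → f ∈ I)
    (hJ : ∀ f, (∀ v, lin v * f ∈ J) → f ∈ J) :
    ∃ v, φ v ≠ 0 ∧ (∀ f, lin v * f ∈ I → f ∈ I) ∧ ∀ f, lin v * f ∈ J → f ∈ J := by
  let T : Set (Submodule κ V) :=
    (fun P : Ideal S => (P.restrictScalars κ).comap lin) ''
      (associatedPrimes S (S ⧸ I) ∪ associatedPrimes S (S ⧸ J)) ∪ {LinearMap.ker φ}
  have hT : T.Finite :=
    (((associatedPrimes.finite S (S ⧸ I)).union (associatedPrimes.finite S (S ⧸ J))).image _).union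
      (Set.finite_singleton _)
  have hproper : ∀ K : Ideal S, (∀ f, (∀ v, lin v * f ∈ K) → f ∈ K) →
      ∀ P ∈ associatedPrimes S (S ⧸ K), (P.restrictScalars κ).comap lin ≠ ⊤ := by
    intro K hK P hP htop
    obtain ⟨hprime, x, hx⟩ := isAssociatedPrime_iff.1 hP
    obtain ⟨f, rfl⟩ := Ideal.Quotient.mk_surjective x
    have hmem : ∀ g : S, g ∈ P ↔ g * f ∈ K := by
      intro g
      rw [hx, Submodule.mem_colon_singleton, Submodule.mem_bot,
        ← Ideal.Quotient.eq_zero_iff_mem, map_mul]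
      rfl
    have hf : f ∈ K := hK f fun v => (hmem _).1 <| by
      have : v ∈ (P.restrictScalars κ).comap lin := htop ▸ Submodule.mem_top
      exact this
    exact hprime.ne_top ((Ideal.eq_top_iff_one _).2 ((hmem 1).2 (by rwa [one_mul])))
  have htop : ⊤ ∉ hT.toFinset := by
    rw [Set.Finite.mem_toFinset]
    rintro (⟨P, hP | hP, h⟩ | h)
    · exact hproper I hI P hP h
    · exact hproper J hJ P hP h
    · exact hφ (LinearMap.ker_eq_top.1 h.symm)
  have hne := Subspace.biUnion_ne_univ_of_top_notMem htop
  obtain ⟨v, hv⟩ := (Set.ne_univ_iff_exists_notMem _).1 hne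
  simp only [Set.Finite.mem_toFinset, Set.mem_iUnion, not_exists] at hv
  have hreg : ∀ K : Ideal S, (∀ P ∈ associatedPrimes S (S ⧸ K), lin v ∉ P) →
      ∀ f, lin v * f ∈ K → f ∈ K := by
    intro K hK f hf
    have hregular : IsSMulRegular (S ⧸ K) (lin v) := by
      by_contra hcon
      have : lin v ∈ ⋃ p ∈ associatedPrimes S (S ⧸ K), (p : Set S) := by
        rw [biUnion_associatedPrimes_eq_compl_regular]
        exact hcon
      simp only [Set.mem_iUnion] at this
      obtain ⟨P, hP, hmem⟩ := this
      exact hK P hP hmem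
    rw [← Ideal.Quotient.eq_zero_iff_mem] at hf ⊢
    exact hregular.right_eq_zero_of_smul hf
  refine ⟨v, fun h0 => hv _ (Or.inr rfl) h0, hreg I fun P hP h => ?_, hreg J fun P hP h => ?_⟩
  · exact hv _ (Or.inl ⟨P, Or.inl hP, rfl⟩) h
  · exact hv _ (Or.inl ⟨P, Or.inr hP, rfl⟩) h

/-- Over an infinite field, two ideals that are saturated with respect to the variables admit a
common regular linear form involving the last variable. -/
lemma exists_regular_linear_form [Infinite κ] (I J : Ideal (MvPolynomial (Fin 3) κ))
    (hI : ∀ f, (∀ i, X i * f ∈ I) → f ∈ I) (hJ : ∀ f, (∀ i, X i * f ∈ J) → f ∈ J) :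
    ∃ a b : κ, (∀ f, (X 2 - (C a * X 0 + C b * X 1)) * f ∈ I → f ∈ I) ∧
      ∀ f, (X 2 - (C a * X 0 + C b * X 1)) * f ∈ J → f ∈ J := by
  let lin : (Fin 3 → κ) →ₗ[κ] MvPolynomial (Fin 3) κ := Fintype.linearCombination κ X
  have hlin : ∀ v, lin v = C (v 0) * X 0 + C (v 1) * X 1 + C (v 2) * X 2 := by
    intro v
    simp [lin, Fintype.linearCombination_apply, Fin.sum_univ_three, smul_eq_C_mul]
  have hX : ∀ i, lin (Pi.single i 1) = X i := by
    intro i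
    simp [lin, Fintype.linearCombination_apply_single]
  obtain ⟨v, hv2, hvI, hvJ⟩ := exists_regular_mem_range lin (LinearMap.proj 2)
    (fun h => by simpa using LinearMap.congr_fun h (Pi.single 2 1)) I J
    (fun f hf => hI f fun i => hX i ▸ hf _) (fun f hf => hJ f fun i => hX i ▸ hf _)
  rw [LinearMap.proj_apply] at hv2
  have hscale : ∀ f, lin v * f
      = C (v 2) * ((X 2 - (C (-(v 0 / v 2)) * X 0 + C (-(v 1 / v 2)) * X 1)) * f) := by
    intro f
    have hdiv : ∀ c : κ, (C c : MvPolynomial (Fin 3) κ) = C (v 2) * C (c / v 2) := by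
      intro c
      rw [← C_mul, mul_div_cancel₀ _ hv2]
    rw [hlin, hdiv (v 0), hdiv (v 1), C_neg, C_neg]
    ring
  exact ⟨_, _, fun f hf => hvI f (hscale f ▸ I.mul_mem_left _ hf),
    fun f hf => hvJ f (hscale f ▸ J.mul_mem_left _ hf)⟩

end RegularLinearForm

section Restriction

variable {κ : Type*} [Field κ]

/-- Restriction of ternary polynomials to the line `x₂ = a x₀ + b x₁`. -/
noncomputable def restrictLine (a b : κ) : MvPolynomial (Fin 3) κ →ₐ[κ] MvPolynomial (Fin 2) κ :=
  aeval ![X 0, X 1, C a * X 0 + C b * X 1]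

lemma restrictLine_isHomogeneous (a b : κ) {f : MvPolynomial (Fin 3) κ} {k : ℕ}
    (hf : f.IsHomogeneous k) : (restrictLine a b f).IsHomogeneous k := by
  have h := hf.aeval (![X 0, X 1, C a * X 0 + C b * X 1] : Fin 3 → MvPolynomial (Fin 2) κ)
      (n := 1) (fun i => by
    fin_cases i
    · exact isHomogeneous_X κ (0 : Fin 2)
    · exact isHomogeneous_X κ (1 : Fin 2)
    · exact (isHomogeneous_C_mul_X a (0 : Fin 2)).add (isHomogeneous_C_mul_X b 1))
  rwa [one_mul] at h

/-- The inclusion of binary polynomials splitting `restrictLine`. -/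
noncomputable def liftLine : MvPolynomial (Fin 2) κ →ₐ[κ] MvPolynomial (Fin 3) κ :=
  aeval ![X 0, X 1]

lemma restrictLine_liftLine (a b : κ) (g : MvPolynomial (Fin 2) κ) :
    restrictLine a b (liftLine g) = g := by
  have h : (restrictLine a b).comp liftLine = AlgHom.id κ _ := by
    ext i
    fin_cases i <;> simp [restrictLine, liftLine]
  exact DFunLike.congr_fun h g

lemma restrictLine_linear_form (a b : κ) :
    restrictLine a b (X 2 - (C a * X 0 + C b * X 1)) = 0 := by
  simp [restrictLine]

lemma restrictLine_eq_zero_iff (a b : κ) (f : MvPolynomial (Fin 3) κ) :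
    restrictLine a b f = 0 ↔ X 2 - (C a * X 0 + C b * X 1) ∣ f := by
  constructor
  · intro hf
    have h : (Ideal.Quotient.mkₐ κ (Ideal.span {X 2 - (C a * X 0 + C b * X 1)})).comp
        (liftLine.comp (restrictLine a b)) =
        Ideal.Quotient.mkₐ κ (Ideal.span {X 2 - (C a * X 0 + C b * X 1)}) := by
      ext i
      fin_cases i
      · simp [restrictLine, liftLine]
      · simp [restrictLine, liftLine]
      · refine (Ideal.Quotient.eq.2 ?_).symm
        rw [Ideal.mem_span_singleton]
        simp [restrictLine, liftLine]
    have h' := DFunLike.congr_fun h f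
    simp only [AlgHom.comp_apply, hf, map_zero] at h'
    exact Ideal.mem_span_singleton.1 (Ideal.Quotient.eq_zero_iff_mem.1 h'.symm)
  · rintro ⟨g, rfl⟩
    rw [map_mul, restrictLine_linear_form, zero_mul]

lemma linear_form_ne_zero (a b : κ) :
    (X 2 - (C a * X 0 + C b * X 1) : MvPolynomial (Fin 3) κ) ≠ 0 := by
  intro h
  have := congrArg (eval ![0, 0, 1]) h
  simp at this

lemma linear_form_isHomogeneous (a b : κ) :
    (X 2 - (C a * X 0 + C b * X 1) : MvPolynomial (Fin 3) κ).IsHomogeneous 1 :=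
  (isHomogeneous_X κ 2).sub ((isHomogeneous_C_mul_X a 0).add (isHomogeneous_C_mul_X b 1))

/-- The restrictions to a line of two coprime polynomials remain coprime when the linear form
defining the line is regular modulo the ideal they generate. -/
lemma isRelPrime_restrictLine {a b : κ} {G₁ G₂ : MvPolynomial (Fin 3) κ} (hG₂ : G₂ ≠ 0)
    (hcop : IsRelPrime G₁ G₂)
    (hreg : ∀ f, (X 2 - (C a * X 0 + C b * X 1)) * f ∈ Ideal.span {G₁, G₂} →
      f ∈ Ideal.span {G₁, G₂}) :
    IsRelPrime (restrictLine a b G₁) (restrictLine a b G₂) := by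
  rintro p ⟨u, hu⟩ ⟨v, hv⟩
  have hzero : restrictLine a b (liftLine v * G₁ - liftLine u * G₂) = 0 := by
    simp only [map_sub, map_mul, restrictLine_liftLine, hu, hv]
    ring
  obtain ⟨w, hw⟩ := (restrictLine_eq_zero_iff a b _).1 hzero
  have hmem := hreg w (by
    rw [← hw]
    exact Ideal.mem_span_pair.2 ⟨liftLine v, -liftLine u, by ring⟩)
  obtain ⟨r, s, hrs⟩ := Ideal.mem_span_pair.1 hmem
  set ℓ : MvPolynomial (Fin 3) κ := X 2 - (C a * X 0 + C b * X 1)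
  have hsyz : (liftLine v - ℓ * r) * G₁ = G₂ * (liftLine u + ℓ * s) := by
    linear_combination hw - ℓ * hrs
  obtain ⟨c, hc⟩ := hcop.symm.dvd_of_dvd_mul_right ⟨_, hsyz⟩
  have hc' : liftLine u + ℓ * s = G₁ * c := by
    refine mul_left_cancel₀ hG₂ ?_
    rw [← hsyz, hc]
    ring
  have hℓ0 : restrictLine a b ℓ = 0 := restrictLine_linear_form a b
  have hvc := congrArg (restrictLine a b) hc
  have huc := congrArg (restrictLine a b) hc'
  simp only [map_sub, map_add, map_mul, restrictLine_liftLine, hℓ0, zero_mul, sub_zero, add_zero,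
    hu, hv] at hvc huc
  have hunit : ∀ {x : MvPolynomial (Fin 2) κ}, x ≠ 0 → x = p * x * restrictLine a b c →
      IsUnit p := by
    intro x hx h
    refine IsUnit.of_mul_eq_one (restrictLine a b c) (mul_left_cancel₀ hx ?_)
    linear_combination -h
  by_cases hv0 : v = 0
  · by_cases hu0 : u = 0
    · rw [hu0, mul_zero, restrictLine_eq_zero_iff] at hu
      rw [hv0, mul_zero, restrictLine_eq_zero_iff] at hv
      have := (hcop hu hv).map (restrictLine a b)
      rw [restrictLine_linear_form] at this
      exact absurd this not_isUnit_zero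
    · exact hunit hu0 huc
  · exact hunit hv0 hvc

end Restriction

section HilbertFunction

variable {κ : Type*} [Field κ]

/-- The restriction to a line of the degree-`k` piece of an ideal. -/
noncomputable def restrictedPiece (a b : κ) (J : Ideal (MvPolynomial (Fin 3) κ)) (k : ℕ) :
    Submodule κ (MvPolynomial (Fin 2) κ) :=
  (gradedIdealPiece κ J k).map (restrictLine a b).toLinearMap

lemma gradedIdealPiece_le (J : Ideal (MvPolynomial (Fin 3) κ)) (k : ℕ) :
    gradedIdealPiece κ J k ≤ homogeneousSubmodule (Fin 3) κ k := inf_le_right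

lemma restrictedPiece_le (a b : κ) (J : Ideal (MvPolynomial (Fin 3) κ)) (k : ℕ) :
    restrictedPiece a b J k ≤ homogeneousSubmodule (Fin 2) κ k := by
  rintro _ ⟨f, hf, rfl⟩
  exact restrictLine_isHomogeneous a b (gradedIdealPiece_le J k hf)

lemma finrank_restrictedPiece_le (a b : κ) (J : Ideal (MvPolynomial (Fin 3) κ)) (k : ℕ) :
    finrank κ (restrictedPiece a b J k) ≤ k + 1 :=
  (Submodule.finrank_mono (restrictedPiece_le a b J k)).trans_eq
    (finrank_homogeneousSubmodule_two k)

lemma X_mul_mem_restrictedPiece {a b : κ} {J : Ideal (MvPolynomial (Fin 3) κ)} {k : ℕ}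
    {f : MvPolynomial (Fin 2) κ} (hf : f ∈ restrictedPiece a b J k) (i : Fin 2) :
    X i * f ∈ restrictedPiece a b J (k + 1) := by
  obtain ⟨g, hg, rfl⟩ := hf
  refine ⟨X i.castSucc * g, ⟨J.mul_mem_left _ hg.1, ?_⟩, ?_⟩
  · rw [add_comm]
    exact (isHomogeneous_X κ _).mul hg.2
  · rw [AlgHom.toLinearMap_apply, map_mul]
    fin_cases i <;> simp [restrictLine]

lemma X_pow_mul_mem_restrictedPiece {a b : κ} {J : Ideal (MvPolynomial (Fin 3) κ)} {k : ℕ}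
    {f : MvPolynomial (Fin 2) κ} (hf : f ∈ restrictedPiece a b J k) (i : Fin 2) (n : ℕ) :
    X i ^ n * f ∈ restrictedPiece a b J (k + n) := by
  induction n with
  | zero => simpa using hf
  | succ n ih =>
    rw [pow_succ', mul_assoc]
    exact X_mul_mem_restrictedPiece ih i

lemma gradedIdealPiece_inf_ker {a b : κ} {J : Ideal (MvPolynomial (Fin 3) κ)}
    (hreg : ∀ f, (X 2 - (C a * X 0 + C b * X 1)) * f ∈ J → f ∈ J) (k : ℕ) :
    gradedIdealPiece κ J (k + 1) ⊓ LinearMap.ker (restrictLine a b).toLinearMap =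
      (gradedIdealPiece κ J k).map (LinearMap.mulLeft κ (X 2 - (C a * X 0 + C b * X 1))) := by
  ext f
  constructor
  · rintro ⟨⟨hfJ, hfk⟩, hf0⟩
    obtain ⟨g, rfl⟩ := (restrictLine_eq_zero_iff a b f).1 hf0
    refine ⟨g, ⟨hreg g hfJ, ?_⟩, rfl⟩
    rw [add_comm] at hfk
    exact isHomogeneous_of_mul (linear_form_ne_zero a b) (linear_form_isHomogeneous a b) hfk
  · rintro ⟨g, ⟨hgJ, hgk⟩, rfl⟩
    refine ⟨⟨J.mul_mem_left _ hgJ, ?_⟩, (restrictLine_eq_zero_iff a b _).2 ⟨g, rfl⟩⟩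
    rw [add_comm]
    exact (linear_form_isHomogeneous a b).mul hgk

lemma finrank_gradedIdealPiece_succ {a b : κ} {J : Ideal (MvPolynomial (Fin 3) κ)}
    (hreg : ∀ f, (X 2 - (C a * X 0 + C b * X 1)) * f ∈ J → f ∈ J) (k : ℕ) :
    finrank κ (gradedIdealPiece κ J (k + 1)) =
      finrank κ (restrictedPiece a b J (k + 1)) + finrank κ (gradedIdealPiece κ J k) := by
  have := finiteDimensional_of_le_homogeneousSubmodule (gradedIdealPiece_le J (k + 1))
  rw [← finrank_map_add_finrank_inf_ker (restrictLine a b).toLinearMap,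
    gradedIdealPiece_inf_ker hreg, finrank_map_mulLeft (linear_form_ne_zero a b)]
  rfl

lemma finrank_gradedIdealPiece_zero (a b : κ) (J : Ideal (MvPolynomial (Fin 3) κ)) :
    finrank κ (gradedIdealPiece κ J 0) = finrank κ (restrictedPiece a b J 0) := by
  have := finiteDimensional_of_le_homogeneousSubmodule (gradedIdealPiece_le J 0)
  rw [← finrank_map_add_finrank_inf_ker (restrictLine a b).toLinearMap]
  have hbot : gradedIdealPiece κ J 0 ⊓ LinearMap.ker (restrictLine a b).toLinearMap = ⊥ := by
    rw [eq_bot_iff]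
    rintro f ⟨⟨-, hf⟩, hf0⟩
    rw [SetLike.mem_coe, mem_homogeneousSubmodule, ← totalDegree_zero_iff_isHomogeneous,
      totalDegree_eq_zero_iff_eq_C] at hf
    rw [hf] at hf0 ⊢
    simpa [restrictLine] using hf0
  rw [hbot, finrank_bot, add_zero]
  rfl

/-- The first difference of the Hilbert function of a quotient by an ideal. -/
noncomputable def hVector (a b : κ) (J : Ideal (MvPolynomial (Fin 3) κ)) (k : ℕ) : ℕ :=
  k + 1 - finrank κ (restrictedPiece a b J k)

lemma sum_hVector_add_finrank {a b : κ} {J : Ideal (MvPolynomial (Fin 3) κ)}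
    (hreg : ∀ f, (X 2 - (C a * X 0 + C b * X 1)) * f ∈ J → f ∈ J) (k : ℕ) :
    ∑ i ∈ Finset.range (k + 1), hVector a b J i + finrank κ (gradedIdealPiece κ J k) =
      (k + 2).choose 2 := by
  induction k with
  | zero =>
    have := finrank_restrictedPiece_le a b J 0
    simp only [zero_add, Finset.sum_range_one, hVector, finrank_gradedIdealPiece_zero a b,
      Nat.choose_self]
    omega
  | succ k ih =>
    have := finrank_restrictedPiece_le a b J (k + 1)
    rw [Finset.sum_range_succ, finrank_gradedIdealPiece_succ hreg,
      Nat.choose_succ_succ' (k + 2) 1, Nat.choose_one_right, hVector]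
    simp only [Nat.reduceAdd]
    omega

lemma hVector_succ_le (a b : κ) (J : Ideal (MvPolynomial (Fin 3) κ)) (k : ℕ) :
    hVector a b J k = k + 1 ∨ hVector a b J (k + 1) ≤ hVector a b J k := by
  by_cases h0 : restrictedPiece a b J k = ⊥
  · left
    rw [hVector, h0, finrank_bot, Nat.sub_zero]
  · right
    have := finiteDimensional_of_le_homogeneousSubmodule (restrictedPiece_le a b J (k + 1))
    have h1 := (mulVars_growth k _ (restrictedPiece_le a b J k) h0).1
    have h2 := Submodule.finrank_mono
      (mulVars_le fun f hf i => X_mul_mem_restrictedPiece (a := a) (b := b) (J := J) (k := k) hf i)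
    simp only [hVector]
    omega

lemma hVector_strict {a b : κ} {J : Ideal (MvPolynomial (Fin 3) κ)} {d : ℕ}
    {g₁ g₂ : MvPolynomial (Fin 2) κ} (hg₁ : g₁ ∈ restrictedPiece a b J d)
    (hg₂ : g₂ ∈ restrictedPiece a b J d) (hcop : IsRelPrime g₁ g₂) (k : ℕ) (hk : d ≤ k + 1) :
    hVector a b J k = 0 ∨ hVector a b J (k + 1) + 1 ≤ hVector a b J k := by
  by_contra! hcon
  obtain ⟨hne, hlt⟩ := hcon
  have hle := finrank_restrictedPiece_le a b J k
  have hle' := finrank_restrictedPiece_le a b J (k + 1)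
  simp only [hVector] at hne hlt
  obtain ⟨F, e, hF, he, hdvd⟩ := exists_common_factor (restrictedPiece_le a b J k)
    (restrictedPiece_le a b J (k + 1)) (fun f hf i => X_mul_mem_restrictedPiece hf i) (by omega)
  have hXcop : IsRelPrime (X 0 ^ (k + 1 - d) : MvPolynomial (Fin 2) κ) (X 1 ^ (k + 1 - d)) := by
    refine IsRelPrime.pow ?_
    rw [X_prime.irreducible.isRelPrime_iff_not_dvd]
    exact X_not_dvd_X_of_ne (by decide)
  have hdiv : ∀ g ∈ restrictedPiece a b J d, F ∣ g := by
    intro g hg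
    have hX : ∀ i, F ∣ X i ^ (k + 1 - d) * g := by
      intro i
      refine hdvd _ ?_
      have := X_pow_mul_mem_restrictedPiece hg i (k + 1 - d)
      rwa [Nat.add_sub_cancel' hk] at this
    exact hXcop.dvd_of_dvd_mul_of_dvd_mul (hX 0) (hX 1)
  have hunit : IsUnit F := hcop (hdiv _ hg₁) (hdiv _ hg₂)
  have he0 : F.totalDegree = 0 := (isUnit_iff_totalDegree_of_isReduced.1 hunit).2
  rw [hF.totalDegree hunit.ne_zero] at he0
  omega

end HilbertFunction

/-- Let `3 ≤ t ≤ d`, let `G₁, G₂` be coprime degree-`d` forms in `κ[x_0,x_1,x_2]`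
over an algebraically closed field, and let `X ⊆ V(G₁,G₂)` be a subscheme, given
by a saturated homogeneous ideal `J ⊇ (G₁,G₂)`, of length `L ≤ td + d − t + 1`
(the length being the eventually constant value of the Hilbert function
`k ↦ C(k+2,2) − dim J_k`). Then the failure of `X` to impose independent
conditions on degree-`d` forms satisfies
`g_X(d) = L − (C(d+2,2) − dim J_d) ≤ C(t−1,2)`. -/
theorem failure_le_choose
    (κ : Type*) [Field κ] [IsAlgClosed κ] (t d : ℕ) (ht : 3 ≤ t) (htd : t ≤ d)
    (G₁ G₂ : MvPolynomial (Fin 3) κ) (hG₁0 : G₁ ≠ 0) (hG₂0 : G₂ ≠ 0)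
    (hG₁ : G₁.IsHomogeneous d) (hG₂ : G₂.IsHomogeneous d) (hcop : IsRelPrime G₁ G₂)
    (J : Ideal (MvPolynomial (Fin 3) κ)) (hJsub : Ideal.span {G₁, G₂} ≤ J)
    (hJhom : ∀ f ∈ J, ∀ k : ℕ, MvPolynomial.homogeneousComponent k f ∈ J)
    (hJsat : ∀ f : MvPolynomial (Fin 3) κ,
      (∃ n : ℕ, ∀ i : Fin 3, (MvPolynomial.X i) ^ n * f ∈ J) → f ∈ J)
    (L N : ℕ)
    (hL : ∀ k : ℕ, N ≤ k →
      Nat.choose (k + 2) 2 - Module.finrank κ (gradedIdealPiece κ J k) = L)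
    (hlen : L ≤ t * d + d - t + 1) :
    (L : ℤ) - ((Nat.choose (d + 2) 2 : ℤ)
        - Module.finrank κ (gradedIdealPiece κ J d))
      ≤ Nat.choose (t - 1) 2 := by
  obtain ⟨a, b, hregI, hregJ⟩ := exists_regular_linear_form (Ideal.span {G₁, G₂}) J
    (fun f hf => mem_span_pair_of_X_mul_mem hG₂0 hcop hf)
    (fun f hf => hJsat f ⟨1, fun i => by simpa using hf i⟩)
  have hpiece : ∀ G ∈ ({G₁, G₂} : Set (MvPolynomial (Fin 3) κ)), G.IsHomogeneous d →
      restrictLine a b G ∈ restrictedPiece a b J d :=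
    fun G hG hGd => ⟨G, ⟨hJsub (Ideal.subset_span hG), hGd⟩, rfl⟩
  have hstrict := hVector_strict (hpiece G₁ (by simp) hG₁) (hpiece G₂ (by simp) hG₂)
    (isRelPrime_restrictLine hG₂0 hcop hregI)
  have hsum := sum_hVector_add_finrank hregJ
  have htotal := hL (d + N) (by omega)
  have htail := tail_sum_le_choose (hVector a b J) t d N ht htd (fun k => Nat.sub_le _ _)
    (hVector_succ_le a b J) hstrict (by
      have := hsum (d + N)
      rw [show d + 1 + N = d + N + 1 by omega]
      omega)
  have h1 := hsum (d + N)
  rw [show d + N + 1 = d + 1 + N by omega, Finset.sum_range_add] at h1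
  have h2 := hsum d
  omega
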